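/- For every real a > 0 there exists a constant C > 0 such that for all real λ ≥ 1: | Γ′(a + iλ) / Γ(a + iλ) − Γ′(iλ) / Γ(iλ) | ≤ C / λ, where Γ is the complex Gamma function and Γ′ denotes its complex derivative (Γ is differentiable and nonvanishing at the points iλ and a + iλ for real λ ≥ 1). -/

import Mathlib

open Filter Topology in
lemma aux_real_bound {x : ℝ} (hx : 0 < x) {n : ℕ} (hn : n ≠ 0) :
    Real.GammaSeq x n ≤ Real.Gamma x := by
  have h := Real.BohrMollerup.ge_logGammaSeq (f := Real.log ∘ Real.Gamma) (x := x) (n := n)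
    Real.convexOn_log_Gamma (fun {y} hy => by
      rw [Function.comp_apply, Real.Gamma_add_one hy.ne',
        Real.log_mul hy.ne' (Real.Gamma_pos_of_pos hy).ne', add_comm, Function.comp_apply]) hx hn
  simp only [Function.comp_apply, Real.Gamma_one, Real.log_one, zero_add] at h
  have hn' : (0 : ℝ) < n := by positivity
  have hp : ∀ j ∈ Finset.range (n + 1), x + (j : ℝ) ≠ 0 := fun j _ => by positivity
  have hpp : 0 < ∏ j ∈ Finset.range (n + 1), (x + (j : ℝ)) :=
    Finset.prod_pos fun j _ => by positivity
  have e : Real.log (Real.GammaSeq x n) = Real.BohrMollerup.logGammaSeq x n := by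
    unfold Real.GammaSeq Real.BohrMollerup.logGammaSeq
    rw [Real.log_div (by positivity) hpp.ne', Real.log_mul (by positivity) (by positivity),
      Real.log_rpow hn', Real.log_prod hp]
  rw [← e] at h
  refine (Real.log_le_log_iff ?_ (Real.Gamma_pos_of_pos hx)).1 h
  unfold Real.GammaSeq
  positivity

lemma aux_ne {s : ℂ} (hs : 0 < s.re) (j : ℕ) : s + (j : ℂ) ≠ 0 := by
  intro h
  have := congrArg Complex.re h
  simp at this
  have h2 : (0 : ℝ) ≤ j := by positivity
  linarith

lemma aux_bound {s : ℂ} (hs : 0 < s.re) {n : ℕ} (hn : n ≠ 0) :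
    ‖Complex.GammaSeq s n‖ ≤ Real.Gamma s.re := by
  refine le_trans ?_ (aux_real_bound hs hn)
  unfold Complex.GammaSeq Real.GammaSeq
  rw [norm_div, norm_mul, norm_prod, Complex.norm_natCast_cpow_of_pos (Nat.pos_of_ne_zero hn),
    Complex.norm_natCast]
  have hpp : 0 < ∏ j ∈ Finset.range (n + 1), (s.re + (j : ℝ)) :=
    Finset.prod_pos fun j _ => by positivity
  refine div_le_div_of_nonneg_left (by positivity) hpp ?_
  refine Finset.prod_le_prod (fun j _ => by positivity) fun j _ => ?_
  have := Complex.re_le_norm (s + j)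
  simpa using this

lemma aux_diff {n : ℕ} (hn : n ≠ 0) :
    DifferentiableOn ℂ (fun s => Complex.GammaSeq s n) {s | 0 < s.re} := by
  intro s hs
  apply DifferentiableAt.differentiableWithinAt
  unfold Complex.GammaSeq
  have hn' : (n : ℂ) ≠ 0 := by exact_mod_cast hn
  refine DifferentiableAt.fun_div ?_ ?_ (Finset.prod_ne_zero_iff.2 fun j _ => aux_ne hs j)
  · exact (DifferentiableAt.const_cpow differentiableAt_id (Or.inl hn')).mul_const _
  · fun_prop

lemma aux_logDeriv {n : ℕ} (hn : n ≠ 0) {s : ℂ} (hs : 0 < s.re) :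
    logDeriv (fun s => Complex.GammaSeq s n) s =
      Complex.log n - ∑ j ∈ Finset.range (n + 1), 1 / (s + j) := by
  have hn' : (n : ℂ) ≠ 0 := by exact_mod_cast hn
  have hd : DifferentiableAt ℂ (fun s : ℂ => (n : ℂ) ^ s) s :=
    DifferentiableAt.const_cpow differentiableAt_id (Or.inl hn')
  have hf : ((n.factorial : ℕ) : ℂ) ≠ 0 := by exact_mod_cast n.factorial_ne_zero
  have hc : (n : ℂ) ^ s ≠ 0 := by simp [Complex.cpow_eq_zero_iff, hn']
  unfold Complex.GammaSeq
  rw [logDeriv_div (f := fun s : ℂ => (n : ℂ) ^ s * (n.factorial : ℂ))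
    (g := fun s : ℂ => ∏ j ∈ Finset.range (n + 1), (s + (j : ℂ))) s (mul_ne_zero hc hf)
    (Finset.prod_ne_zero_iff.2 fun j _ => aux_ne hs j) (hd.mul_const _) (by fun_prop),
    logDeriv_mul_const _ _ hf,
    logDeriv_prod (f := fun (j : ℕ) (s : ℂ) => s + (j : ℂ)) (fun j _ => aux_ne hs j)
      (fun j _ => by fun_prop)]
  congr 1
  · have hD : deriv (HPow.hPow (n : ℂ)) s = (n : ℂ) ^ s * Complex.log n * 1 :=
      (HasDerivAt.const_cpow (hasDerivAt_id s) (Or.inl hn')).deriv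
    rw [logDeriv_apply, hD]
    field_simp
  · refine Finset.sum_congr rfl fun j _ => ?_
    simp [logDeriv_apply]

lemma aux_open : IsOpen {s : ℂ | 0 < s.re} := isOpen_lt continuous_const Complex.continuous_re

lemma aux_ball {z : ℂ} (hz : 1 ≤ z.re) {w : ℂ} (hw : w ∈ Metric.closedBall z (1/2)) :
    w.re ∈ Set.Icc (z.re - 1/2) (z.re + 1/2) := by
  rw [mem_closedBall_iff_norm] at hw
  have := (Complex.abs_re_le_norm (w - z)).trans hw
  rw [abs_le, Complex.sub_re] at this
  constructor <;> linarith [this.1, this.2]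

lemma aux_ball_sub {z : ℂ} (hz : 1 ≤ z.re) :
    Metric.closedBall z (1/2) ⊆ {s : ℂ | 0 < s.re} := by
  intro w hw
  have := (aux_ball hz hw).1
  show 0 < w.re
  linarith

lemma aux_gamma_diff : DifferentiableOn ℂ Complex.Gamma {s | 0 < s.re} := by
  intro s hs
  apply DifferentiableAt.differentiableWithinAt
  apply Complex.differentiableAt_Gamma
  intro m h
  exact aux_ne hs m (by rw [h]; simp)

open Filter Topology in
lemma aux_tendsto_deriv {z : ℂ} (hz : 1 ≤ z.re) :
    Tendsto (fun n : ℕ => deriv (fun s => Complex.GammaSeq s n) z) atTop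
      (𝓝 (deriv Complex.Gamma z)) := by
  have hr : (0 : ℝ) < 1/2 := by norm_num
  rw [← Complex.cderiv_eq_deriv aux_open aux_gamma_diff hr (aux_ball_sub hz)]
  have hev : ∀ᶠ n : ℕ in atTop, Complex.cderiv (1/2) (fun s => Complex.GammaSeq s n) z =
      deriv (fun s => Complex.GammaSeq s n) z := by
    filter_upwards [eventually_ne_atTop 0] with n hn
    exact Complex.cderiv_eq_deriv aux_open (aux_diff hn) hr (aux_ball_sub hz)
  refine Tendsto.congr' hev ?_
  unfold Complex.cderiv
  refine Tendsto.const_smul ?_ _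
  obtain ⟨M, hM⟩ : ∃ M, ∀ x ∈ Set.Icc (z.re - 1/2) (z.re + 1/2), ‖Real.Gamma x‖ ≤ M := by
    refine isCompact_Icc.exists_bound_of_continuousOn ?_
    intro x hx
    have hx1 := hx.1
    refine (Real.differentiableAt_Gamma ?_).continuousAt.continuousWithinAt
    intro m h
    have : (0 : ℝ) ≤ m := by positivity
    linarith
  have hmem : ∀ θ, circleMap z (1/2) θ ∈ Metric.closedBall z (1/2) := fun θ =>
    circleMap_mem_closedBall z hr.le θ
  have hpos : ∀ θ, 0 < (circleMap z (1/2) θ).re := fun θ => aux_ball_sub hz (hmem θ)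
  have hne : ∀ θ, circleMap z (1/2) θ - z ≠ 0 := fun θ => by
    rw [sub_ne_zero]; exact circleMap_ne_center hr.ne'
  unfold circleIntegral
  refine intervalIntegral.tendsto_integral_filter_of_dominated_convergence
    (fun _ => 2 * M) ?_ ?_ ?_ ?_
  · filter_upwards [eventually_ne_atTop 0] with n hn
    refine Continuous.aestronglyMeasurable ?_
    have h1 : Continuous fun θ => Complex.GammaSeq (circleMap z (1/2) θ) n :=
      (aux_diff hn).continuousOn.comp_continuous (continuous_circleMap z _) hpos
    have h2 : Continuous fun θ => ((circleMap z (1/2) θ - z) ^ 2)⁻¹ :=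
      Continuous.inv₀ (((continuous_circleMap z _).sub continuous_const).pow 2)
        fun θ => pow_ne_zero _ (hne θ)
    simp only [deriv_circleMap]
    exact (((continuous_circleMap 0 _).mul continuous_const)).smul (h2.smul h1)
  · filter_upwards [eventually_ne_atTop 0] with n hn
    refine MeasureTheory.ae_of_all _ fun θ _ => ?_
    have h1 := (aux_bound (hpos θ) hn).trans ((Real.le_norm_self _).trans
      (hM _ (aux_ball hz (hmem θ))))
    rw [norm_smul, norm_smul, deriv_circleMap]
    simp only [circleMap_sub_center, norm_mul, norm_inv, norm_pow, norm_circleMap_zero,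
      Complex.norm_I]
    rw [abs_of_pos hr]
    linarith
  · exact intervalIntegrable_const
  · refine MeasureTheory.ae_of_all _ fun θ _ => ?_
    exact ((Complex.GammaSeq_tendsto_Gamma _).const_smul _).const_smul _

open Filter Topology in
lemma aux_tendsto_logDeriv {z : ℂ} (hz : 1 ≤ z.re) :
    Tendsto (fun n : ℕ => Complex.log n - ∑ j ∈ Finset.range (n + 1), 1 / (z + j)) atTop
      (𝓝 (deriv Complex.Gamma z / Complex.Gamma z)) := by
  have hz0 : 0 < z.re := by linarith
  have h := (aux_tendsto_deriv hz).div (Complex.GammaSeq_tendsto_Gamma z)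
    (Complex.Gamma_ne_zero_of_re_pos hz0)
  refine h.congr' ?_
  filter_upwards [eventually_ne_atTop 0] with n hn
  rw [← aux_logDeriv hn hz0, logDeriv_apply]
  rfl

lemma aux_term {a l : ℝ} (ha : 0 < a) (hl : 1 ≤ l) {z : ℂ} (hre : z.re = 1) (him : z.im = l)
    (k : ℕ) : ‖1 / (z + k) - 1 / (a + z + k)‖ ≤
      2 * a * (1 / (l + (k : ℝ)) - 1 / (l + ((k + 1 : ℕ) : ℝ))) := by
  have h1 : z + k ≠ 0 := aux_ne (by linarith) k
  have h2 : (a : ℂ) + z + k ≠ 0 := aux_ne (by simp; linarith) k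
  have hk : (0 : ℝ) ≤ k := by positivity
  have e : 1 / (z + k) - 1 / (a + z + k) = a / ((z + k) * (a + z + k)) := by
    field_simp; ring
  have n1 : ‖z + k‖ ≤ ‖(a : ℂ) + z + k‖ := by
    rw [Complex.norm_def, Complex.norm_def]
    apply Real.sqrt_le_sqrt
    simp only [Complex.normSq_apply, Complex.add_re, Complex.add_im, Complex.ofReal_re,
      Complex.ofReal_im, Complex.natCast_re, Complex.natCast_im, hre, him]
    nlinarith
  have n2 : ‖z + k‖ ^ 2 = (1 + (k : ℝ)) ^ 2 + l ^ 2 := by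
    rw [Complex.sq_norm, Complex.normSq_apply]
    simp [hre, him]; ring
  rw [e, norm_div, norm_mul, Complex.norm_real, Real.norm_of_nonneg ha.le]
  have hp : 0 < ‖z + k‖ := norm_pos_iff.2 h1
  calc a / (‖z + k‖ * ‖(a : ℂ) + z + k‖) ≤ a / (‖z + k‖ ^ 2) := by
        rw [sq]; gcongr
    _ = a / ((1 + (k : ℝ)) ^ 2 + l ^ 2) := by rw [n2]
    _ ≤ a / ((l + k) * (l + k + 1) / 2) := by
        gcongr
        nlinarith [sq_nonneg (l - (k + 1))]
    _ = _ := by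
        push_cast
        field_simp
        ring

open Filter Topology in
lemma aux_main {a l : ℝ} (ha : 0 < a) (hl : 1 ≤ l) {z : ℂ} (hre : z.re = 1) (him : z.im = l) :
    ‖deriv Complex.Gamma (a + z) / Complex.Gamma (a + z) -
      deriv Complex.Gamma z / Complex.Gamma z‖ ≤ 2 * a / l := by
  have t := (aux_tendsto_logDeriv (z := a + z) (by simp; linarith)).sub
    (aux_tendsto_logDeriv (z := z) (by linarith))
  refine le_of_tendsto t.norm (Eventually.of_forall fun n => ?_)
  have e : (Complex.log n - ∑ j ∈ Finset.range (n + 1), 1 / (a + z + (j : ℂ))) -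
      (Complex.log n - ∑ j ∈ Finset.range (n + 1), 1 / (z + (j : ℂ))) =
      ∑ j ∈ Finset.range (n + 1), (1 / (z + (j : ℂ)) - 1 / (a + z + (j : ℂ))) := by
    rw [Finset.sum_sub_distrib]; ring
  rw [e]
  refine (norm_sum_le _ _).trans ((Finset.sum_le_sum fun j _ => aux_term ha hl hre him j).trans ?_)
  rw [← Finset.mul_sum, Finset.sum_range_sub' (fun k : ℕ => 1 / (l + (k : ℝ)))]
  have h3 : 0 ≤ 1 / (l + ((n + 1 : ℕ) : ℝ)) := by positivity
  have : 2 * a / l = 2 * a * (1 / (l + ((0 : ℕ) : ℝ))) := by simp; ring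
  rw [this]
  gcongr
  linarith

lemma aux_shift {s : ℂ} (hs : ∀ m : ℕ, s ≠ -m) :
    deriv Complex.Gamma s / Complex.Gamma s =
      deriv Complex.Gamma (s + 1) / Complex.Gamma (s + 1) - s⁻¹ := by
  have := Complex.digamma_apply_add_one s hs
  rw [Complex.digamma_def, logDeriv_apply, logDeriv_apply] at this
  rw [this]; ring

theorem stmt19 (a : ℝ) (ha : 0 < a) :
    ∃ C : ℝ, 0 < C ∧
      ∀ l : ℝ, 1 ≤ l →
        DifferentiableAt ℂ Complex.Gamma (Complex.I * (l : ℂ)) ∧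
        DifferentiableAt ℂ Complex.Gamma ((a : ℂ) + Complex.I * (l : ℂ)) ∧
        Complex.Gamma (Complex.I * (l : ℂ)) ≠ 0 ∧
        Complex.Gamma ((a : ℂ) + Complex.I * (l : ℂ)) ≠ 0 ∧
        ‖deriv Complex.Gamma ((a : ℂ) + Complex.I * (l : ℂ)) /
              Complex.Gamma ((a : ℂ) + Complex.I * (l : ℂ)) -
            deriv Complex.Gamma (Complex.I * (l : ℂ)) /
              Complex.Gamma (Complex.I * (l : ℂ))‖ ≤ C / l := by
  refine ⟨2 * a + 2, by positivity, fun l hl => ?_⟩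
  have hl0 : 0 < l := by linarith
  have h1 : ∀ m : ℕ, Complex.I * (l : ℂ) ≠ -m := fun m h => by
    have := congrArg Complex.im h
    simp at this
    linarith
  have h2 : ∀ m : ℕ, (a : ℂ) + Complex.I * (l : ℂ) ≠ -m := fun m h => by
    have := congrArg Complex.im h
    simp at this
    linarith
  refine ⟨Complex.differentiableAt_Gamma _ h1, Complex.differentiableAt_Gamma _ h2,
    Complex.Gamma_ne_zero h1, Complex.Gamma_ne_zero h2, ?_⟩
  rw [aux_shift h1, aux_shift h2, add_assoc]
  have hm := aux_main (z := Complex.I * (l : ℂ) + 1) ha hl (by simp) (by simp)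
  have b1 : ‖(Complex.I * (l : ℂ))⁻¹‖ ≤ 1 / l := by
    simp [abs_of_pos hl0]
  have b2 : ‖((a : ℂ) + Complex.I * (l : ℂ))⁻¹‖ ≤ 1 / l := by
    rw [norm_inv, one_div]
    apply inv_anti₀ hl0
    have := Complex.abs_im_le_norm ((a : ℂ) + Complex.I * (l : ℂ))
    simp [abs_of_pos hl0] at this
    exact this
  have e : (2 * a + 2) / l = 2 * a / l + (1 / l + 1 / l) := by ring
  rw [e, sub_sub_sub_comm]
  refine (norm_sub_le _ _).trans (add_le_add hm ((norm_sub_le _ _).trans (add_le_add b2 b1)))
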